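/- For a monic p-Eisenstein polynomial f ∈ ℤ[x] of degree n with root α generating K = ℚ(α): if n ≢ 0 (mod p) then p^{n−1} exactly divides Δ(K), and if n ≡ 0 (mod p) then p^n divides Δ(K). -/

import Mathlib

open Polynomial

lemma eis_decomp (p : ℕ) (f : Polynomial ℤ) (hmonic : f.Monic) (n : ℕ) (hn : f.natDegree = n)
    (hn0 : 0 < n) (heis : f.IsEisensteinAt (Ideal.span {(p : ℤ)})) :
    ∃ (m : ℤ) (h : Polynomial ℤ), ¬ (p : ℤ) ∣ m ∧
      f = X ^ n + C (p : ℤ) * (C m + X * h) := by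
  have h1 : C (p : ℤ) ∣ f.eraseLead := by
    rw [C_dvd_iff_dvd_coeff]
    intro i
    rcases lt_trichotomy i f.natDegree with hi | hi | hi
    · rw [eraseLead_coeff_of_ne _ hi.ne]
      exact Ideal.mem_span_singleton.1 (heis.mem hi)
    · rw [hi, eraseLead_coeff_natDegree]; exact dvd_zero _
    · rw [eraseLead_coeff_of_ne _ hi.ne', coeff_eq_zero_of_natDegree_lt hi]; exact dvd_zero _
  obtain ⟨g, hg⟩ := h1
  have hf : f = X ^ n + C (p : ℤ) * g := by
    have := eraseLead_add_C_mul_X_pow f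
    rw [hmonic.leadingCoeff, hn, hg] at this
    rw [← this]; simp [add_comm]
  have hgX : C (g.coeff 0) + X * g.divX = g := by
    rw [add_comm]; exact X_mul_divX_add g
  refine ⟨g.coeff 0, g.divX, ?_, ?_⟩
  · rintro ⟨k, hk⟩
    apply heis.notMem
    rw [Ideal.span_singleton_pow, Ideal.mem_span_singleton]
    refine ⟨k, ?_⟩
    rw [hf]
    simp [hn0.ne, hk]
    ring
  · rw [hgX, ← hf]

lemma eis_step {O : Type*} [CommRing O] (p : ℕ) (hp : p.Prime) (Q : Ideal O) (a b : O) (m : ℤ)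
    (hm : ¬ (p : ℤ) ∣ m) (n : ℕ)
    (ha : a ^ n + (p : O) * ((m : O) + a * b) = 0) (e k : ℕ) (he : 1 ≤ e) (hk : 1 ≤ k)
    (hpe : (p : O) ∈ Q ^ e) (hak : a ∈ Q ^ k) (hnk : e + 1 ≤ k * n) : (p : O) ∈ Q ^ (e + 1) := by
  have hcop : IsCoprime (p : ℤ) m :=
    (Nat.prime_iff_prime_int.1 hp).irreducible.coprime_iff_not_dvd.2 hm
  obtain ⟨u, v, huv⟩ := hcop
  have huv' : (u : O) * p + v * m = 1 := by exact_mod_cast congrArg (Int.cast : ℤ → O) huv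
  have haQ : a ∈ Q := Ideal.pow_le_self (by omega) hak
  have h1 : a ^ n ∈ Q ^ (e + 1) := by
    have := Ideal.pow_mem_pow hak n
    rw [← pow_mul] at this
    exact Ideal.pow_le_pow_right hnk this
  have h2 : (p : O) * a ∈ Q ^ (e + 1) := by
    rw [pow_succ]; exact Ideal.mul_mem_mul hpe haQ
  have h3 : (p : O) * p ∈ Q ^ (e + 1) := by
    rw [pow_succ]; exact Ideal.mul_mem_mul hpe (Ideal.pow_le_self (by omega) hpe)
  have : (p : O) = (u : O) * (p * p) - v * (a ^ n) - (v * b) * (p * a) := by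
    linear_combination (-p : O) * huv' + (v : O) * ha
  rw [this]
  exact sub_mem (sub_mem (Ideal.mul_mem_left _ _ h3) (Ideal.mul_mem_left _ _ h1))
    (Ideal.mul_mem_left _ _ h2)

lemma eis_conductor (p : ℕ) (hp : Nat.Prime p) {K : Type*} [Field K] [NumberField K]
    (a : NumberField.RingOfIntegers K)
    (hgen : Algebra.adjoin ℚ {(algebraMap (NumberField.RingOfIntegers K) K a)} = ⊤)
    (heis : (minpoly ℤ (algebraMap (NumberField.RingOfIntegers K) K a)).IsEisensteinAt
      (Ideal.span {(p : ℤ)})) :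
    ∃ m : ℤ, ¬ (p : ℤ) ∣ m ∧ (m : NumberField.RingOfIntegers K) ∈ conductor ℤ a := by
  set α := algebraMap (NumberField.RingOfIntegers K) K a with hα
  have hIntg : IsIntegral ℤ α := NumberField.RingOfIntegers.isIntegral_coe a
  have hQ : IsIntegral ℚ α := Algebra.IsIntegral.isIntegral α
  obtain ⟨B, hB⟩ : ∃ B : PowerBasis ℚ K, B.gen = α :=
    ⟨(Algebra.adjoin.powerBasis' hQ).map
      ((Subalgebra.equivOfEq _ _ hgen).trans (Subalgebra.topEquiv)), by simp⟩
  have hBint : IsIntegral ℤ B.gen := hB ▸ hIntg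
  have hd : IsIntegral ℤ (Algebra.discr ℚ B.basis) := by
    apply Algebra.discr_isIntegral
    intro i
    rw [B.basis_eq_pow]
    exact hBint.pow _
  obtain ⟨d, hd⟩ := IsIntegrallyClosed.isIntegral_iff.1 hd
  have hd0 : d ≠ 0 := by
    rintro rfl
    exact Algebra.discr_not_zero_of_basis ℚ B.basis (by rw [← hd]; simp)
  have hpp := Nat.prime_iff_prime_int.1 hp
  obtain ⟨r, m, hm, hdm⟩ := (FiniteMultiplicity.of_prime_left hpp hd0).exists_eq_pow_mul_and_not_dvd
    |> fun h => (⟨_, h⟩ : ∃ r, ∃ m : ℤ, d = (p : ℤ) ^ r * m ∧ ¬ (p : ℤ) ∣ m)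
  refine ⟨m, hdm, ?_⟩
  rw [mem_conductor_iff]
  intro z
  have hz : IsIntegral ℤ (algebraMap (NumberField.RingOfIntegers K) K z) :=
    NumberField.RingOfIntegers.isIntegral_coe z
  have h1 := Algebra.discr_mul_isIntegral_mem_adjoin ℚ hBint hz
  have h2 : (m • algebraMap (NumberField.RingOfIntegers K) K z) ∈ Algebra.adjoin ℤ {B.gen} := by
    refine mem_adjoin_of_smul_prime_pow_smul_of_minpoly_isEisensteinAt (K := ℚ) (n := r) hpp hBint
      (hz.smul m) ?_ (hB ▸ heis)
    rw [← hd, hm] at h1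
    convert h1 using 1
    simp [Algebra.smul_def, mul_assoc]
  have h3 : (Algebra.adjoin ℤ {α}) = (Algebra.adjoin ℤ {a}).map
      (IsScalarTower.toAlgHom ℤ (NumberField.RingOfIntegers K) K) := by
    rw [AlgHom.map_adjoin_singleton]; rfl
  rw [hB, h3] at h2
  obtain ⟨y, hy, hyz⟩ := h2
  have : y = (m : NumberField.RingOfIntegers K) * z := by
    apply FaithfulSMul.algebraMap_injective (NumberField.RingOfIntegers K) K
    simpa using hyz
  rw [← this]; exact hy

/-- For a monic `p`-Eisenstein polynomial `f` of degree `n` with root `α` generating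
`K = ℚ(α)`: if `p ∤ n` then `p^{n-1}` exactly divides `Δ(K)`, and if `p ∣ n` then
`p^n ∣ Δ(K)`. -/
theorem eisenstein_field_discriminant (p : ℕ) (hp : Nat.Prime p)
    (f : Polynomial ℤ) (hmonic : f.Monic) (n : ℕ) (hn : f.natDegree = n)
    (heis : f.IsEisensteinAt (Ideal.span {(p : ℤ)}))
    (K : Type*) [Field K] [NumberField K] (α : K)
    (hroot : Polynomial.aeval α f = 0)
    (hgen : IntermediateField.adjoin ℚ {α} = ⊤) :
    (¬ p ∣ n →
      (p : ℤ) ^ (n - 1) ∣ NumberField.discr K ∧ ¬ (p : ℤ) ^ n ∣ NumberField.discr K) ∧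
    (p ∣ n → (p : ℤ) ^ n ∣ NumberField.discr K) := by
  have hpp := Nat.prime_iff_prime_int.1 hp
  have hn0 : 0 < n := by
    rcases Nat.eq_zero_or_pos n with h | h
    · rw [h] at hn
      rw [hmonic.natDegree_eq_zero.1 hn] at hroot
      simp at hroot
    · exact h
  have hαint : IsIntegral ℤ α := ⟨f, hmonic, hroot⟩
  have hirr : Irreducible f := heis.irreducible
    ((Ideal.span_singleton_prime hpp.ne_zero).2 hpp) hmonic.isPrimitive (hn ▸ hn0)
  have hminQ : minpoly ℚ α = f.map (algebraMap ℤ ℚ) := by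
    symm
    refine minpoly.eq_of_irreducible_of_monic ?_ ?_ (hmonic.map _)
    · exact (hmonic.irreducible_iff_irreducible_map_fraction_map).1 hirr
    · rw [aeval_map_algebraMap, hroot]
  have hminZ : minpoly ℤ α = f := by
    have := minpoly.isIntegrallyClosed_eq_field_fractions' ℚ hαint
    rw [hminQ] at this
    exact (map_injective _ (RingHom.injective_int _) this).symm
  have hfr : Module.finrank ℚ K = n := by
    rw [← hn, ← hmonic.natDegree_map (algebraMap ℤ ℚ), ← hminQ]
    exact ((Field.primitive_element_iff_minpoly_natDegree_eq ℚ α).1 hgen).symm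
  have hgen' : Algebra.adjoin ℚ {α} = ⊤ := by
    rw [← IntermediateField.adjoin_simple_toSubalgebra_of_isAlgebraic
      (Algebra.IsAlgebraic.isAlgebraic α), hgen]; rfl
  obtain ⟨a, rfl⟩ : ∃ a : NumberField.RingOfIntegers K, algebraMap _ K a = α := ⟨⟨α, hαint⟩, rfl⟩
  obtain ⟨m₀, hm₀, hm₀c⟩ := eis_conductor p hp a hgen' (hminZ ▸ heis)
  have hcond := conductor_mul_differentIdeal ℤ ℚ K a hgen'
  have hmina : minpoly ℤ a = f := by
    rw [← hminZ]
    exact (minpoly.algebraMap_eq (FaithfulSMul.algebraMap_injective _ _) a).symm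
  rw [hmina] at hcond
  obtain ⟨m, h, hm, hf⟩ := eis_decomp p f hmonic n hn hn0 heis
  have hroota : a ^ n + (p : NumberField.RingOfIntegers K) * ((m : NumberField.RingOfIntegers K) +
      a * aeval a h) = 0 := by
    have h0 : aeval a f = 0 := by rw [← hmina]; exact minpoly.aeval _ _
    rw [hf] at h0
    simpa using h0
  have hder : ∃ c, aeval a (derivative f) = n * a ^ (n - 1) +
      (p : NumberField.RingOfIntegers K) * c := by
    refine ⟨aeval a (derivative (C m + X * h)), ?_⟩
    rw [hf, derivative_add, derivative_C_mul, derivative_X_pow]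
    simp
  obtain ⟨c, hder⟩ := hder
  rw [hder] at hcond
  -- the prime above p
  have hN : Ideal.absNorm (Ideal.span {(p : NumberField.RingOfIntegers K)}) = p ^ n := by
    rw [Ideal.absNorm_span_natCast, NumberField.RingOfIntegers.rank, hfr]
  have hp0 : (p : NumberField.RingOfIntegers K) ≠ 0 := by exact_mod_cast hp.ne_zero
  have key : ∀ Q : Ideal (NumberField.RingOfIntegers K), Q.IsPrime →
      (p : NumberField.RingOfIntegers K) ∈ Q →
      a ∈ Q ∧ Ideal.absNorm Q = p ∧ Ideal.span {(p : NumberField.RingOfIntegers K)} = Q ^ n := by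
    intro Q hQ hpQ
    have haQ : a ∈ Q := by
      apply hQ.mem_of_pow_mem n
      rw [eq_neg_of_add_eq_zero_left hroota]
      exact neg_mem (Ideal.mul_mem_right _ _ hpQ)
    have hpow : ∀ e, 1 ≤ e → e ≤ n → (p : NumberField.RingOfIntegers K) ∈ Q ^ e := by
      intro e he
      induction e, he using Nat.le_induction with
      | base => intro _; simpa using hpQ
      | succ e he ih =>
        intro hen
        exact eis_step p hp Q a _ m hm n hroota e 1 he le_rfl (ih (by omega)) (by simpa using haQ)
          (by omega)
    have hdvd : Q ^ n ∣ Ideal.span {(p : NumberField.RingOfIntegers K)} := by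
      rw [Ideal.dvd_span_singleton]; exact hpow n hn0 le_rfl
    have hNQ : Ideal.absNorm Q ∣ p := by
      have h1 := map_dvd Ideal.absNorm hdvd
      rw [hN, map_pow] at h1
      exact (Nat.pow_dvd_pow_iff hn0.ne').1 h1
    have hNQ' : Ideal.absNorm Q = p := by
      rcases (Nat.dvd_prime hp).1 hNQ with h1 | h1
      · exact absurd (Ideal.absNorm_eq_one_iff.1 h1) hQ.ne_top
      · exact h1
    refine ⟨haQ, hNQ', ?_⟩
    obtain ⟨J, hJ⟩ := hdvd
    have h2 := congrArg Ideal.absNorm hJ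
    rw [hN, map_mul, map_pow, hNQ'] at h2
    have h3 : Ideal.absNorm J = 1 := by
      have := hp.pos
      exact Nat.eq_of_mul_eq_mul_left (pow_pos this n) (by rw [← h2, mul_one])
    rw [hJ, Ideal.absNorm_eq_one_iff.1 h3, Ideal.mul_top]
  obtain ⟨Q, hQmax, hQp⟩ := Ideal.exists_le_maximal
    (Ideal.span {(p : NumberField.RingOfIntegers K)}) (by
      intro h1
      rw [h1, Ideal.absNorm_top] at hN
      exact (Nat.one_lt_pow hn0.ne' hp.one_lt).ne hN)
  have hQ := hQmax.isPrime
  have hpQ : (p : NumberField.RingOfIntegers K) ∈ Q := hQp (Ideal.mem_span_singleton_self _)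
  obtain ⟨haQ, hNQ, hpQn⟩ := key Q hQ hpQ
  have hQ0 : Q ≠ ⊥ := by
    rintro rfl
    exact hp0 (by simpa using hpQ)
  have hQpr : Prime Q := Ideal.prime_of_isPrime hQ0 hQ
  have huniq : ∀ P : Ideal (NumberField.RingOfIntegers K), P.IsPrime →
      (p : NumberField.RingOfIntegers K) ∈ P → P = Q := by
    intro P hP hpP
    have h1 : Q ^ n ≤ P := by rw [← hpQn]; simpa [Ideal.span_le] using hpP
    exact (hQmax.eq_of_le hP.ne_top (hP.le_of_pow_le h1)).symm
  have hpQn' : (p : NumberField.RingOfIntegers K) ∈ Q ^ n := by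
    rw [← hpQn]; exact Ideal.mem_span_singleton_self _
  -- conductor is prime to Q
  have hIntg : ∀ z : ℤ, ¬ (p : ℤ) ∣ z → (z : NumberField.RingOfIntegers K) ∉ Q := by
    intro z hz hzQ
    obtain ⟨u, v, huv⟩ : IsCoprime (p : ℤ) z := hpp.irreducible.coprime_iff_not_dvd.2 hz
    apply hQ.ne_top
    rw [Ideal.eq_top_iff_one]
    have huv' : (u : NumberField.RingOfIntegers K) * p + v * z = 1 := by
      exact_mod_cast congrArg (Int.cast : ℤ → NumberField.RingOfIntegers K) huv
    rw [← huv']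
    exact add_mem (Ideal.mul_mem_left _ _ hpQ) (Ideal.mul_mem_left _ _ hzQ)
  have hcQ : ¬ Q ∣ conductor ℤ a := fun h1 => hIntg m₀ hm₀ (Ideal.dvd_iff_le.1 h1 hm₀c)
  have hiff : ∀ k, Q ^ k ∣ differentIdeal ℤ (NumberField.RingOfIntegers K) ↔
      (n * a ^ (n - 1) + (p : NumberField.RingOfIntegers K) * c) ∈ Q ^ k := by
    intro k
    rw [← Ideal.dvd_span_singleton, ← hcond]
    exact ⟨fun h1 => Dvd.dvd.mul_left h1 _, fun h1 => hQpr.pow_dvd_of_dvd_mul_left k hcQ h1⟩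
  have hlow : ∀ k, Q ^ k ∣ differentIdeal ℤ (NumberField.RingOfIntegers K) →
      (p : ℤ) ^ k ∣ NumberField.discr K := by
    intro k h1
    have h2 := map_dvd Ideal.absNorm h1
    rw [map_pow, hNQ, NumberField.absNorm_differentIdeal K] at h2
    rw [← Int.dvd_natAbs]
    exact_mod_cast h2
  constructor
  · intro hpn
    have hD : Q ^ (n - 1) ∣ differentIdeal ℤ (NumberField.RingOfIntegers K) := by
      rw [hiff]
      exact add_mem (Ideal.mul_mem_left _ _ (Ideal.pow_mem_pow haQ _))
        (Ideal.mul_mem_right _ _ (Ideal.pow_le_pow_right (by omega) hpQn'))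
    refine ⟨hlow _ hD, fun hdisc => ?_⟩
    have hnD : ¬ Q ^ n ∣ differentIdeal ℤ (NumberField.RingOfIntegers K) := by
      rw [hiff]
      intro h1
      have h2 : (n : NumberField.RingOfIntegers K) * a ^ (n - 1) ∈ Q ^ n := by
        have := sub_mem h1 (Ideal.mul_mem_right c _ hpQn')
        simpa using this
      have haQ2 : a ∉ Q ^ 2 := by
        intro h3
        have h4 := eis_step p hp Q a _ m hm n hroota n 2 hn0 (by norm_num) hpQn' h3 (by omega)
        rw [← Ideal.dvd_span_singleton, hpQn] at h4
        have := (pow_dvd_pow_iff hQpr.ne_zero hQpr.not_isUnit).1 h4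
        omega
      rw [← Ideal.dvd_span_singleton, ← Ideal.span_singleton_mul_span_singleton] at h2
      have h5 : Q ^ n ∣ Ideal.span {a ^ (n - 1)} := by
        refine hQpr.pow_dvd_of_dvd_mul_left n ?_ h2
        rw [Ideal.dvd_span_singleton]
        have := hIntg n (by exact_mod_cast hpn)
        exact_mod_cast this
      obtain ⟨J, hJ⟩ := Ideal.dvd_span_singleton.2 haQ
      rw [← Ideal.span_singleton_pow, hJ, mul_pow] at h5
      have h6 : Q ^ (n - 1) * Q ∣ Q ^ (n - 1) * J ^ (n - 1) := by
        rw [← pow_succ, Nat.sub_add_cancel hn0]; exact h5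
      have h7 := hQpr.dvd_of_dvd_pow ((mul_dvd_mul_iff_left (pow_ne_zero _ hQpr.ne_zero)).1 h6)
      apply haQ2
      rw [← Ideal.dvd_span_singleton, hJ, pow_two]
      exact mul_dvd_mul_left _ h7
    obtain ⟨J, hJ⟩ := hD
    have hND := NumberField.absNorm_differentIdeal K (NumberField.RingOfIntegers K)
    rw [hJ, map_mul, map_pow, hNQ] at hND
    rw [← Int.dvd_natAbs, ← hND] at hdisc
    have h8 : p ^ (n - 1) * p ∣ p ^ (n - 1) * Ideal.absNorm J := by
      rw [← pow_succ, Nat.sub_add_cancel hn0]; exact_mod_cast hdisc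
    have h9 : p ∣ Ideal.absNorm J := (mul_dvd_mul_iff_left (pow_ne_zero _ hp.ne_zero)).1 h8
    obtain ⟨P, hP, h₁, h₂⟩ := Ideal.exists_isMaximal_dvd_of_dvd_absNorm hpp J
      (by exact_mod_cast h9)
    have hPQ : P = Q := by
      apply huniq P hP.isPrime
      have : (p : ℤ) ∈ Ideal.under ℤ P := by rw [h₁]; exact Ideal.mem_span_singleton_self _
      simpa using this
    apply hnD
    rw [hJ]
    nth_rw 1 [← Nat.sub_add_cancel hn0]
    rw [pow_succ]
    exact mul_dvd_mul_left _ (hPQ ▸ h₂)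
  · intro hpn
    apply hlow
    rw [hiff]
    obtain ⟨k, rfl⟩ := hpn
    refine add_mem (Ideal.mul_mem_right _ _ ?_) (Ideal.mul_mem_right _ _ hpQn')
    rw [Nat.cast_mul]
    exact Ideal.mul_mem_right _ _ hpQn'
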